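/- Let F be a positive CNF formula with k ≥ 1 variables and n ≥ 1 clauses (each clause a nonempty subset of the variables). Then every minimum connected dominating set of G_F contains exactly three vertices from each gadget B_i, i ∈ [k]. -/

import Mathlib

namespace CDG

/-- Vertices of the graph `B`. -/
inductive BVert : Type
  | a | e | b | b' | h | k | f1 | g1 | f2 | g2

/-- The edges of the graph `B`. -/
def BRel : BVert → BVert → Prop
  | .a, .e => True
  | .e, .b => True
  | .b, .b' => True
  | .a, .h => True
  | .h, .e => True
  | .e, .f1 => True
  | .f1, .b => True
  | .b, .f2 => True
  | .f2, .e => True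
  | .e, .g1 => True
  | .g1, .f1 => True
  | .e, .g2 => True
  | .g2, .f2 => True
  | .h, .k => True
  | .k, .a => True
  | _, _ => False

/-- The graph `B`. -/
def graphB : SimpleGraph BVert := SimpleGraph.fromRel BRel

/-- `S` is a connected dominating set of `G`: every vertex is in `S` or adjacent to a
vertex of `S`, and the subgraph induced by `S` is connected. -/
def IsConnDomSet {V : Type*} (G : SimpleGraph V) (S : Set V) : Prop :=
  (∀ v : V, v ∈ S ∨ ∃ u ∈ S, G.Adj u v) ∧ (G.induce S).Connected

/-- The connected domination number of `G`. -/
noncomputable def connDomNum {V : Type*} (G : SimpleGraph V) : ℕ :=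
  sInf {m | ∃ S : Set V, IsConnDomSet G S ∧ S.ncard = m}

/-- Vertices of the graph `H n`: `u i` is `u_i` for `0 ≤ i ≤ n+1`, `x t` is `x_{t+1}` and
`y t` is `y_{t+1}` for `0 ≤ t ≤ n-2`. -/
inductive HVert (n : ℕ) : Type
  | u : Fin (n + 2) → HVert n
  | x : Fin (n - 1) → HVert n
  | y : Fin (n - 1) → HVert n

/-- The edges of the graph `H n`. -/
def HRel (n : ℕ) : HVert n → HVert n → Prop
  | .u i, .u j => (j : ℕ) = (i : ℕ) + 1
  | .u i, .x t => (i : ℕ) = (t : ℕ) + 1 ∨ (i : ℕ) = (t : ℕ) + 2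
  | .x t, .y s => t = s
  | .y s, .u i => (i : ℕ) = (s : ℕ) + 2
  | _, _ => False

/-- The graph `H n`. -/
def graphH (n : ℕ) : SimpleGraph (HVert n) := SimpleGraph.fromRel (HRel n)

/-- Vertices of the graph `C m`: `cc i` is `c^{i+1}` and `dd i` is `d^{i+1}` for `0 ≤ i ≤ m-1`. -/
inductive CVert (m : ℕ) : Type
  | c : CVert m
  | d : CVert m
  | cc : Fin m → CVert m
  | dd : Fin m → CVert m

/-- The edges of the graph `C m`. -/
def CRel (m : ℕ) : CVert m → CVert m → Prop
  | .c, .d => True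
  | .c, .dd _ => True
  | .cc i, .dd j => i = j
  | _, _ => False

/-- The graph `C m`. -/
def graphC (m : ℕ) : SimpleGraph (CVert m) := SimpleGraph.fromRel (CRel m)

/-- Vertices of the graph `A`. -/
inductive AVert : Type
  | p1 | p2 | p3 | q1 | q2 | r1 | r2

/-- The edges of the graph `A`. -/
def ARel : AVert → AVert → Prop
  | .p1, .p2 => True
  | .p2, .p3 => True
  | .p1, .q1 => True
  | .q1, .r1 => True
  | .p2, .q1 => True
  | .p2, .r1 => True
  | .p2, .q2 => True
  | .q2, .r2 => True
  | .p3, .q2 => True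
  | .p3, .r2 => True
  | _, _ => False

/-- Vertices of the graph `G_F`, for a formula with `k` variables and `n` clauses:
`k` copies of `B`, `n` copies of `C n`, one copy of `H (2n+7)`, and a copy of `A`
exactly when `k` is odd (realized as `AVert × Fin (k % 2)`). -/
abbrev GVert (k n : ℕ) : Type :=
  (Fin k × BVert) ⊕ (Fin n × CVert n) ⊕ HVert (2 * n + 7) ⊕ (AVert × Fin (k % 2))

/-- The edges of the graph `G_F`, where the formula `F` assigns to each clause `j`
the (nonempty) set of variables appearing in it. -/
def GRel (k n : ℕ) (F : Fin n → Finset (Fin k)) : GVert k n → GVert k n → Prop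
  | .inl (i, v), .inl (i', w) => i = i' ∧ BRel v w
  | .inr (.inl (j, v)), .inr (.inl (j', w)) => j = j' ∧ CRel n v w
  | .inr (.inr (.inl v)), .inr (.inr (.inl w)) => HRel (2 * n + 7) v w
  | .inr (.inr (.inr (v, _))), .inr (.inr (.inr (w, _))) => ARel v w
  | .inr (.inl (j, v)), .inl (i, w) =>
      i ∈ F j ∧ w = .a ∧ (v = .c ∨ ∃ t, v = .cc t)
  | .inr (.inr (.inl v)), .inl (i, w) =>
      v = .u ⟨0, by omega⟩ ∧ (w = .a ∨ w = .b)
  | .inr (.inr (.inr (v, _))), .inr (.inr (.inl w)) =>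
      v = .p1 ∧ w = .u ⟨0, by omega⟩
  | _, _ => False

/-- The graph `G_F`. -/
def graphGF (k n : ℕ) (F : Fin n → Finset (Fin k)) : SimpleGraph (GVert k n) :=
  SimpleGraph.fromRel (GRel k n F)

/-- Vertices of the graph `G'_F`, for a formula with `k` variables and `n` clauses:
`k` copies of `B`, `n` copies of `C n`, one copy of `H 6`, and a copy of `A`
exactly when `k` is odd (realized as `AVert × Fin (k % 2)`). -/
abbrev GVert' (k n : ℕ) : Type :=
  (Fin k × BVert) ⊕ (Fin n × CVert n) ⊕ HVert 6 ⊕ (AVert × Fin (k % 2))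

/-- The edges of the graph `G'_F`. -/
def GRel' (k n : ℕ) (F : Fin n → Finset (Fin k)) : GVert' k n → GVert' k n → Prop
  | .inl (i, v), .inl (i', w) => i = i' ∧ BRel v w
  | .inr (.inl (j, v)), .inr (.inl (j', w)) => j = j' ∧ CRel n v w
  | .inr (.inr (.inl v)), .inr (.inr (.inl w)) => HRel 6 v w
  | .inr (.inr (.inr (v, _))), .inr (.inr (.inr (w, _))) => ARel v w
  | .inr (.inl (j, v)), .inl (i, w) =>
      i ∈ F j ∧ w = .a ∧ (v = .c ∨ ∃ t, v = .cc t)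
  | .inr (.inr (.inl v)), .inl (i, w) =>
      v = .u ⟨7, by omega⟩ ∧ (w = .a ∨ w = .b)
  | .inr (.inr (.inr (v, _))), .inr (.inr (.inl w)) =>
      v = .p1 ∧ w = .u ⟨7, by omega⟩
  | _, _ => False

/-- The graph `G'_F`. -/
def graphGF' (k n : ℕ) (F : Fin n → Finset (Fin k)) : SimpleGraph (GVert' k n) :=
  SimpleGraph.fromRel (GRel' k n F)

theorem BVert.finite : Finite BVert :=
  Set.finite_univ_iff.mp <| (Set.toFinite
    ({.a, .e, .b, .b', .h, .k, .f1, .g1, .f2, .g2} : Set BVert)).subset fun v _ => by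
      cases v <;> simp

theorem AVert.finite : Finite AVert :=
  Set.finite_univ_iff.mp <| (Set.toFinite
    ({.p1, .p2, .p3, .q1, .q2, .r1, .r2} : Set AVert)).subset fun v _ => by
      cases v <;> simp

theorem CVert.finite (m : ℕ) : Finite (CVert m) :=
  Set.finite_univ_iff.mp <| (((Set.toFinite {CVert.c, CVert.d}).union
    (Set.finite_range CVert.cc)).union (Set.finite_range CVert.dd)).subset fun v _ => by
      cases v <;> simp

theorem HVert.finite (m : ℕ) : Finite (HVert m) :=
  Set.finite_univ_iff.mp <| (((Set.finite_range HVert.u).union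
    (Set.finite_range HVert.x)).union (Set.finite_range HVert.y)).subset fun v _ => by
      cases v <;> simp

theorem GVert.finite (k n : ℕ) : Finite (GVert k n) := by
  have := BVert.finite
  have := AVert.finite
  have := CVert.finite n
  have := HVert.finite (2 * n + 7)
  infer_instance

/-- A map sending adjacent vertices to reachable pairs preserves reachability. -/
theorem reachable_map_of_adj {V W : Type*} {G : SimpleGraph V} {H : SimpleGraph W} (f : V → W)
    (hf : ∀ x y, G.Adj x y → H.Reachable (f x) (f y)) {x y : V} (h : G.Reachable x y) :
    H.Reachable (f x) (f y) := by
  obtain ⟨p⟩ := h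
  induction p with
  | nil => exact .refl _
  | cons hadj _ ih => exact (hf _ _ hadj).trans ih

/-- In a connected induced subgraph with two vertices, every vertex has a neighbour. -/
theorem exists_adj_mem_of_induce_connected {V : Type*} {G : SimpleGraph V} {S : Set V}
    (h : (G.induce S).Connected) {x y : V} (hx : x ∈ S) (hy : y ∈ S) (hne : x ≠ y) :
    ∃ z ∈ S, G.Adj x z := by
  obtain ⟨p⟩ := h.preconnected ⟨x, hx⟩ ⟨y, hy⟩
  cases p with
  | nil => exact absurd rfl hne
  | cons hadj _ => exact ⟨_, Subtype.prop _, hadj⟩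

theorem graphB_dominator_k {w : BVert} (h : w = .k ∨ graphB.Adj w .k) :
    w = .a ∨ w = .h ∨ w = .k := by
  cases w <;> simp_all [graphB, SimpleGraph.fromRel_adj, BRel]

theorem graphB_dominator_g1 {w : BVert} (h : w = .g1 ∨ graphB.Adj w .g1) :
    w = .e ∨ w = .f1 ∨ w = .g1 := by
  cases w <;> simp_all [graphB, SimpleGraph.fromRel_adj, BRel]

theorem graphB_dominator_b' {w : BVert} (h : w = .b' ∨ graphB.Adj w .b') :
    w = .b ∨ w = .b' := by
  cases w <;> simp_all [graphB, SimpleGraph.fromRel_adj, BRel]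

section Gadget

variable {k n : ℕ} {F : Fin n → Finset (Fin k)} {i : Fin k}

/-- The vertices of the copy `B_i` inside `G_F`. -/
def gadgetB (n : ℕ) (i : Fin k) : Set (GVert k n) := {v | ∃ w : BVert, v = .inl (i, w)}

theorem graphGF_adj_gadgetB {w w' : BVert} :
    (graphGF k n F).Adj (.inl (i, w)) (.inl (i, w')) ↔ graphB.Adj w w' := by
  simp [graphGF, graphB, SimpleGraph.fromRel_adj, GRel]

theorem eq_of_graphGF_adj {w : BVert} {v : GVert k n} (hv : v ∉ gadgetB n i)
    (h : (graphGF k n F).Adj v (.inl (i, w))) : w = .a ∨ w = .b := by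
  obtain ⟨-, h | h⟩ := h <;>
    rcases v with ⟨i', w'⟩ | ⟨j, v⟩ | v | v <;> simp_all [GRel, gadgetB]

/-- A vertex of `B_i` other than `a_i` and `b_i` is dominated from inside `B_i`. -/
theorem exists_mem_of_dominates {S : Set (GVert k n)}
    (hdom : ∀ v, v ∈ S ∨ ∃ u ∈ S, (graphGF k n F).Adj u v)
    (w : BVert) (ha : w ≠ .a) (hb : w ≠ .b) :
    ∃ w', (.inl (i, w') : GVert k n) ∈ S ∧ (w' = w ∨ graphB.Adj w' w) := by
  obtain h | ⟨u, hu, hadj⟩ := hdom (.inl (i, w))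
  · exact ⟨w, h, .inl rfl⟩
  · by_cases hui : u ∈ gadgetB n i
    · obtain ⟨w', rfl⟩ := hui
      exact ⟨w', hu, .inr (graphGF_adj_gadgetB.mp hadj)⟩
    · exact absurd (eq_of_graphGF_adj hui hadj) (by tauto)

theorem three_le_ncard_inter_gadgetB {S : Set (GVert k n)}
    (hS : IsConnDomSet (graphGF k n F) S) : 3 ≤ (S ∩ gadgetB n i).ncard := by
  have := GVert.finite k n
  obtain ⟨hdom, hconn⟩ := hS
  obtain ⟨x, hxS, hx⟩ := exists_mem_of_dominates (i := i) hdom .k (by simp) (by simp)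
  obtain ⟨y, hyS, hy⟩ := exists_mem_of_dominates (i := i) hdom .g1 (by simp) (by simp)
  obtain ⟨z, hzS, hz⟩ := exists_mem_of_dominates (i := i) hdom .b' (by simp) (by simp)
  have hx' : x = .a ∨ x = .h ∨ x = .k := graphB_dominator_k hx
  have hy' : y = .e ∨ y = .f1 ∨ y = .g1 := graphB_dominator_g1 hy
  have hz' : z = .b ∨ z = .b' := graphB_dominator_b' hz
  have hbS : (.inl (i, .b) : GVert k n) ∈ S := by
    obtain rfl | rfl := hz'
    · exact hzS
    · obtain ⟨v, hvS, hv⟩ := exists_adj_mem_of_induce_connected hconn hzS hxS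
        (by rcases hx' with rfl | rfl | rfl <;> simp)
      by_cases hvi : v ∈ gadgetB n i
      · obtain ⟨w, rfl⟩ := hvi
        have hw := graphGF_adj_gadgetB.mp hv
        obtain rfl | rfl := graphB_dominator_b' (.inr hw.symm)
        exacts [hvS, absurd rfl hw.ne]
      · simpa using eq_of_graphGF_adj hvi hv.symm
  have hcard : ({.inl (i, .b), .inl (i, x), .inl (i, y)} : Set (GVert k n)).ncard = 3 := by
    rw [Set.ncard_eq_three]
    refine ⟨_, _, _, ?_, ?_, ?_, rfl⟩ <;>
      rcases hx' with rfl | rfl | rfl <;> rcases hy' with rfl | rfl | rfl <;> simp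
  rw [← hcard]
  refine Set.ncard_le_ncard ?_
  rintro v (rfl | rfl | rfl)
  exacts [⟨hbS, _, rfl⟩, ⟨hxS, _, rfl⟩, ⟨hyS, _, rfl⟩]

/-- Replacing the part of a connected dominating set inside `B_i` by `{a_i, e_i, b_i}` gives a
connected dominating set. -/
theorem IsConnDomSet.replace_gadgetB {S : Set (GVert k n)}
    (hS : IsConnDomSet (graphGF k n F) S) (i : Fin k) :
    IsConnDomSet (graphGF k n F)
      (S \ gadgetB n i ∪ {.inl (i, .a), .inl (i, .e), .inl (i, .b)}) := by
  classical
  obtain ⟨hdom, hconn⟩ := hS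
  set T : Set (GVert k n) := S \ gadgetB n i ∪ {.inl (i, .a), .inl (i, .e), .inl (i, .b)} with hT
  have ha : (.inl (i, .a) : GVert k n) ∈ T := by simp [hT]
  have he : (.inl (i, .e) : GVert k n) ∈ T := by simp [hT]
  have hb : (.inl (i, .b) : GVert k n) ∈ T := by simp [hT]
  have hab : ∀ w, w = .a ∨ w = .b → (.inl (i, w) : GVert k n) ∈ T := by
    rintro w (rfl | rfl) <;> assumption
  constructor
  · intro v
    by_cases hv : v ∈ gadgetB n i
    · obtain ⟨w, rfl⟩ := hv
      have hw : w = .a ∨ w = .b ∨ graphB.Adj .a w ∨ graphB.Adj .e w ∨ graphB.Adj .b w := by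
        cases w <;> simp [graphB, SimpleGraph.fromRel_adj, BRel]
      rcases hw with rfl | rfl | h | h | h
      · exact .inl ha
      · exact .inl hb
      · exact .inr ⟨_, ha, graphGF_adj_gadgetB.mpr h⟩
      · exact .inr ⟨_, he, graphGF_adj_gadgetB.mpr h⟩
      · exact .inr ⟨_, hb, graphGF_adj_gadgetB.mpr h⟩
    · obtain h | ⟨u, hu, hadj⟩ := hdom v
      · exact .inl (.inl ⟨h, hv⟩)
      · right
        by_cases hui : u ∈ gadgetB n i
        · obtain ⟨w, rfl⟩ := hui
          exact ⟨_, hab w (eq_of_graphGF_adj hv hadj.symm), hadj⟩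
        · exact ⟨u, .inl ⟨hu, hui⟩, hadj⟩
  · let G := (graphGF k n F).induce T
    have hea : G.Reachable ⟨_, he⟩ ⟨_, ha⟩ := SimpleGraph.Adj.reachable <|
      show (graphGF k n F).Adj (.inl (i, .e)) (.inl (i, .a)) from
        graphGF_adj_gadgetB.mpr (by simp [graphB, SimpleGraph.fromRel_adj, BRel])
    have heb : G.Reachable ⟨_, he⟩ ⟨_, hb⟩ := SimpleGraph.Adj.reachable <|
      show (graphGF k n F).Adj (.inl (i, .e)) (.inl (i, .b)) from
        graphGF_adj_gadgetB.mpr (by simp [graphB, SimpleGraph.fromRel_adj, BRel])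
    have hout : ∀ (x : GVert k n) (hx : x ∈ T) (w : BVert), x ∉ gadgetB n i →
        (graphGF k n F).Adj x (.inl (i, w)) → G.Reachable ⟨_, he⟩ ⟨x, hx⟩ := by
      intro x hx w hxi hadj
      have hw := eq_of_graphGF_adj hxi hadj
      have hadj' : G.Reachable ⟨_, hab w hw⟩ ⟨x, hx⟩ :=
        SimpleGraph.Adj.reachable (show (graphGF k n F).Adj _ _ from hadj.symm)
      rcases hw with rfl | rfl
      exacts [hea.trans hadj', heb.trans hadj']
    let f : S → T := fun x =>
      if hx : x.1 ∈ gadgetB n i then ⟨_, he⟩ else ⟨x.1, .inl ⟨x.2, hx⟩⟩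
    have hf : ∀ x y, ((graphGF k n F).induce S).Adj x y → G.Reachable (f x) (f y) := by
      rintro ⟨x, hx⟩ ⟨y, hy⟩ (hadj : (graphGF k n F).Adj x y)
      by_cases hxi : x ∈ gadgetB n i <;> by_cases hyi : y ∈ gadgetB n i <;>
        simp only [f, hxi, hyi, dite_true, dite_false]
      · exact .refl _
      · obtain ⟨w, rfl⟩ := hxi
        exact hout y _ w hyi hadj.symm
      · obtain ⟨w, rfl⟩ := hyi
        exact (hout x _ w hxi hadj).symm
      · exact SimpleGraph.Adj.reachable (show (graphGF k n F).Adj x y from hadj)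
    obtain ⟨w, hwS, -⟩ := exists_mem_of_dominates (i := i) hdom .k (by simp) (by simp)
    have hfw : f ⟨_, hwS⟩ = ⟨_, he⟩ := dif_pos ⟨w, rfl⟩
    rw [SimpleGraph.connected_iff_exists_forall_reachable]
    refine ⟨⟨_, he⟩, ?_⟩
    rintro ⟨x, ⟨hxS, hxi⟩ | rfl | rfl | rfl⟩
    · have hfx : f ⟨x, hxS⟩ = ⟨x, .inl ⟨hxS, hxi⟩⟩ := dif_neg hxi
      have := reachable_map_of_adj f hf (hconn.preconnected ⟨_, hwS⟩ ⟨x, hxS⟩)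
      rwa [hfw, hfx] at this
    exacts [hea, .refl _, heb]

end Gadget

theorem min_connDomSet_three_in_each_B (k n : ℕ) (hk : 1 ≤ k) (hn : 1 ≤ n)
    (F : Fin n → Finset (Fin k)) (hF : ∀ j, (F j).Nonempty)
    (S : Set (GVert k n)) (hS : IsConnDomSet (graphGF k n F) S)
    (hmin : S.ncard = connDomNum (graphGF k n F)) (i : Fin k) :
    (S ∩ {v : GVert k n | ∃ w : BVert, v = .inl (i, w)}).ncard = 3 := by
  have := GVert.finite k n
  change (S ∩ gadgetB n i).ncard = 3
  refine le_antisymm ?_ (three_le_ncard_inter_gadgetB hS)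
  have hle : S.ncard ≤ (S \ gadgetB n i ∪ {.inl (i, .a), .inl (i, .e), .inl (i, .b)}).ncard :=
    hmin ▸ Nat.sInf_le ⟨_, hS.replace_gadgetB i, rfl⟩
  have hunion := Set.ncard_union_le (S \ gadgetB n i)
    ({.inl (i, .a), .inl (i, .e), .inl (i, .b)} : Set (GVert k n))
  have hthree : ({.inl (i, .a), .inl (i, .e), .inl (i, .b)} : Set (GVert k n)).ncard = 3 :=
    Set.ncard_eq_three.mpr ⟨_, _, _, by simp, by simp, by simp, rfl⟩
  have hsplit := Set.ncard_inter_add_ncard_sdiff_eq_ncard S (gadgetB n i)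
  omega


end CDG
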